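/- Let f=(m,n,k) be an integer binary quadratic form with discriminant Δ=k²−4mn>0 not a perfect square. The period Γ(f) is palindromic and of odd length if and only if the class of f is supersymmetric, i.e., f is SL(2,ℤ)-equivalent both to its conjugate (m,n,−k) and to its adjoint (−n,−m,k). -/

import Mathlib

/-- Iterates of the Gauss map starting from `ξ`. -/
noncomputable def gaussIter (ξ : ℝ) : ℕ → ℝ
  | 0 => ξ
  | n + 1 => 1 / (gaussIter ξ n - (⌊gaussIter ξ n⌋ : ℝ))

/-- The `n`-th partial quotient of the regular continued fraction expansion of `ξ`. -/
noncomputable def cfTerm (ξ : ℝ) (n : ℕ) : ℤ := ⌊gaussIter ξ n⌋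

/-- The continued fraction expansion of `ξ` is periodic with period length `P` from index `N`. -/
def IsEventuallyPeriodicCF (ξ : ℝ) (N P : ℕ) : Prop :=
  1 ≤ P ∧ ∀ j : ℕ, cfTerm ξ (N + j + P) = cfTerm ξ (N + j)

/-- `s` is the (minimal) period of the eventually periodic regular continued fraction
expansion of `ξ`; it is well defined up to cyclic permutation. -/
def IsCFPeriod (s : List ℤ) (ξ : ℝ) : Prop :=
  s ≠ [] ∧
  (∃ N : ℕ, ∀ j : ℕ, cfTerm ξ (N + j) = s.getD (j % s.length) 0) ∧
  (∀ P : ℕ, 1 ≤ P → (∃ N : ℕ, IsEventuallyPeriodicCF ξ N P) → s.length ≤ P)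

/-- The value of the binary quadratic form `f = (m, n, k)`, i.e. `m*x^2 + n*y^2 + k*x*y`. -/
def qval (f : ℤ × ℤ × ℤ) (x y : ℤ) : ℤ := f.1 * x ^ 2 + f.2.1 * y ^ 2 + f.2.2 * x * y

/-- The discriminant `k^2 - 4*m*n` of the form `f = (m, n, k)`. -/
def formDisc (f : ℤ × ℤ × ℤ) : ℤ := f.2.2 ^ 2 - 4 * f.1 * f.2.1

/-- `SL(2,ℤ)`-equivalence of binary quadratic forms. -/
def SLEquiv (f g : ℤ × ℤ × ℤ) : Prop :=
  ∃ a b c d : ℤ, a * d - b * c = 1 ∧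
    ∀ x y : ℤ, qval g x y = qval f (a * x + b * y) (c * x + d * y)

/-- The root with the plus sign of `m*ξ^2 + k*ξ + n = 0`, for `f = (m, n, k)`. -/
noncomputable def xiPlus (f : ℤ × ℤ × ℤ) : ℝ :=
  (-(f.2.2 : ℝ) + Real.sqrt ((formDisc f : ℤ) : ℝ)) / (2 * (f.1 : ℝ))

/-- The root with the minus sign of `m*ξ^2 + k*ξ + n = 0`, for `f = (m, n, k)`. -/
noncomputable def xiMinus (f : ℤ × ℤ × ℤ) : ℝ :=
  (-(f.2.2 : ℝ) - Real.sqrt ((formDisc f : ℤ) : ℝ)) / (2 * (f.1 : ℝ))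

/-- The conjugate `(m, n, -k)` of the form `(m, n, k)`. -/
def conjF (f : ℤ × ℤ × ℤ) : ℤ × ℤ × ℤ := (f.1, f.2.1, -f.2.2)

/-- The adjoint `(-n, -m, k)` of the form `(m, n, k)`. -/
def adjF (f : ℤ × ℤ × ℤ) : ℤ × ℤ × ℤ := (-f.2.1, -f.1, f.2.2)

/-- The antipodal `(-n, -m, -k)` of the form `(m, n, k)`. -/
def antipF (f : ℤ × ℤ × ℤ) : ℤ × ℤ × ℤ := (-f.2.1, -f.1, -f.2.2)

/-- A form `(m, n, k)` is primitive if `gcd(m, n, k) = 1`. -/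
def IsPrimitiveForm (f : ℤ × ℤ × ℤ) : Prop := Int.gcd f.1 (Int.gcd f.2.1 f.2.2) = 1

/-- A finite sequence is palindromic if some cyclic permutation of it equals its reversal. -/
def Palindromic (s : List ℤ) : Prop := ∃ t : List ℤ, List.IsRotated s t ∧ t.reverse = t

/-- A finite sequence is bipalindromic if some cyclic permutation of it is the concatenation
of two palindrome blocks each of odd length. -/
def Bipalindromic (s : List ℤ) : Prop :=
  ∃ u v : List ℤ, List.IsRotated s (u ++ v) ∧ Odd u.length ∧ Odd v.length ∧
    u.reverse = u ∧ v.reverse = v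

/-!
Two irrationals are related by an integral fractional linear map of determinant `ε = ±1` if and
only if their continued fractions share a tail, beginning at indices `i` and `j` with
`(-1) ^ (i + j) = ε` (Serret). A form `f` of fixed nonsquare discriminant is determined by its root
`ξ⁺`, so `SL(2,ℤ)`-equivalence of forms is equivalence of these roots with `ε = 1`. The conjugate
of `f` has root `-ξ⁻` and the adjoint has root `-1 / ξ⁻`. As `x ↦ -x` has determinant `-1` and
`x ↦ -1 / x` has determinant `1`, the class of `f` is supersymmetric if and only if `ξ⁺` and `ξ⁻`
share tails with both signs. By Galois' theorem the period of `ξ⁻` is the reversal of the period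
`s` of `ξ⁺`, so sharing a tail at all means that `s` is a rotation of its reversal; sharing tails
with both signs means that, in addition, `ξ⁺` shares a tail with itself with `ε = -1`, that is, `s`
has odd length.
-/

/-! ### Periodic words -/

section Words

variable {α : Type*}

/-- A nonempty word that is not a proper power. For the empty word the condition fails, since
`0 ∣ P` only holds for `P = 0`. -/
def IsPrimitiveWord (s : List α) : Prop := ∀ P : ℕ, s.rotate P = s → s.length ∣ P

lemma IsPrimitiveWord.ne_nil {s : List α} (hs : IsPrimitiveWord s) : s ≠ [] := by
  rintro rfl
  simpa using hs 1 (List.rotate_nil 1)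

lemma IsPrimitiveWord.reverse {s : List α} (hs : IsPrimitiveWord s) :
    IsPrimitiveWord s.reverse := by
  intro P hP
  rw [List.rotate_reverse, List.reverse_inj] at hP
  have hle : P % s.length ≤ s.length :=
    (Nat.mod_lt P (List.length_pos_iff.mpr hs.ne_nil)).le
  have hmod : s.length ∣ P % s.length := (Nat.dvd_sub_iff_right hle dvd_rfl).mp (hs _ hP)
  rw [List.length_reverse]
  exact (Nat.dvd_mod_iff dvd_rfl).mp hmod

/-- Since `w + 1` inverts `2` modulo `2 * w + 1`, rotating by `k * (w + 1)` is half of rotating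
by `k`. -/
lemma palindromic_iff_isRotated_reverse {s : List ℤ} (hs : Odd s.length) :
    Palindromic s ↔ s ~r s.reverse := by
  constructor
  · rintro ⟨t, hst, ht⟩
    have hrev := hst.reverse
    rw [ht] at hrev
    exact hst.trans hrev.symm
  · rintro ⟨k, hk⟩
    obtain ⟨w, hw⟩ := hs
    set r := k * (w + 1) with hr
    have hdouble : r + r = k + s.length * k := by rw [hr, hw]; ring
    have hmod : k + (s.length - r % s.length) ≡ r [MOD s.length] := by
      have hlt := Nat.mod_lt r (show 0 < s.length by omega)
      apply Nat.ModEq.add_right_cancel' (r % s.length)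
      calc k + (s.length - r % s.length) + r % s.length = k + s.length := by omega
        _ ≡ k + s.length * k [MOD s.length] := by simp [Nat.ModEq]
        _ = r + r := hdouble.symm
        _ ≡ r + r % s.length [MOD s.length] := (Nat.mod_modEq r s.length).symm.add_left r
    refine ⟨s.rotate r, ⟨r, rfl⟩, ?_⟩
    rw [List.reverse_rotate, ← hk, List.rotate_rotate, ← List.rotate_mod, hmod, List.rotate_mod]

variable [Zero α] {s t : List α} {a : ℕ → α} {N : ℕ}

/-- From index `N` on, the sequence `a` is the periodic repetition of the word `s`. The shape
matches the second clause of `IsCFPeriod`, so that the default value `0` is never reached unless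
`s` is empty. -/
def RepeatsFrom (s : List α) (a : ℕ → α) (N : ℕ) : Prop :=
  ∀ j : ℕ, a (N + j) = s.getD (j % s.length) 0

lemma getD_rotate_mod (s : List α) (k j : ℕ) :
    (s.rotate k).getD (j % s.length) 0 = s.getD ((k + j) % s.length) 0 := by
  rcases eq_or_ne s [] with rfl | hs
  · simp
  have hpos : 0 < s.length := List.length_pos_iff.mpr hs
  have hj := Nat.mod_lt j hpos
  rw [List.getD_eq_getElem _ _ (by rwa [List.length_rotate]),
    List.getD_eq_getElem _ _ (Nat.mod_lt _ hpos), List.getElem_rotate]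
  congr 1
  simp [add_comm]

/-- Stepping back by `j + 1` is stepping forward by `(s.length - 1) * (j + 1)`. -/
lemma getD_reverse_mod (hs : s ≠ []) (j : ℕ) :
    s.reverse.getD (j % s.length) 0 = s.getD ((s.length - 1) * (j + 1) % s.length) 0 := by
  have hpos : 0 < s.length := List.length_pos_iff.mpr hs
  have hlt := Nat.mod_lt j hpos
  have hindex : (s.length - 1) * (j + 1) % s.length = s.length - 1 - j % s.length := by
    obtain ⟨m, hm⟩ : ∃ m, s.length = m + 1 := Nat.exists_eq_add_of_le' hpos
    rw [hm] at hlt ⊢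
    refine Nat.mod_eq_of_modEq (Nat.ModEq.add_right_cancel' (j % (m + 1)) ?_) (by omega)
    calc m * (j + 1) + j % (m + 1) ≡ m * (j + 1) + j [MOD m + 1] :=
          (Nat.mod_modEq j (m + 1)).add_left _
      _ = m + (m + 1) * j := by ring
      _ ≡ m [MOD m + 1] := by simp [Nat.ModEq]
      _ = m + 1 - 1 - j % (m + 1) + j % (m + 1) := by omega
  rw [hindex, List.getD_eq_getElem _ _ (by rwa [List.length_reverse]),
    List.getD_eq_getElem _ _ (by omega), List.getElem_reverse]

lemma RepeatsFrom.rotate (hs : RepeatsFrom s a N) (k : ℕ) :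
    RepeatsFrom (s.rotate k) a (N + k) := by
  intro j
  rw [add_assoc, hs, List.length_rotate, getD_rotate_mod]

lemma RepeatsFrom.add_length_mul (hs : RepeatsFrom s a N) (q : ℕ) :
    RepeatsFrom s a (N + s.length * q) := by
  simpa only [List.rotate_length_mul] using hs.rotate (s.length * q)

lemma RepeatsFrom.exists_ge (hs : RepeatsFrom s a N) (hne : s ≠ []) (M : ℕ) :
    ∃ N' ≥ M, RepeatsFrom s a N' :=
  ⟨N + s.length * M,
    (Nat.le_mul_of_pos_left M (List.length_pos_iff.mpr hne)).trans (Nat.le_add_left _ _),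
    hs.add_length_mul M⟩

lemma RepeatsFrom.eq_of_length_eq (hs : RepeatsFrom s a N) (ht : RepeatsFrom t a N)
    (hlen : s.length = t.length) : s = t := by
  refine List.ext_getElem hlen fun i hi hi' => ?_
  have h := (hs i).symm.trans (ht i)
  rwa [Nat.mod_eq_of_lt hi, Nat.mod_eq_of_lt hi', List.getD_eq_getElem _ _ hi,
    List.getD_eq_getElem _ _ hi'] at h

lemma RepeatsFrom.isRotated {M : ℕ} (hs : RepeatsFrom s a N) (ht : RepeatsFrom t a M)
    (hne : t ≠ []) (hlen : s.length = t.length) : s ~r t := by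
  obtain ⟨M', hM', ht'⟩ := ht.exists_ge hne N
  refine ⟨M' - N, RepeatsFrom.eq_of_length_eq (a := a) (N := M') ?_ ht' ?_⟩
  · simpa only [Nat.add_sub_cancel' hM'] using hs.rotate (M' - N)
  · rwa [List.length_rotate]

lemma RepeatsFrom.rotate_eq_self_iff (hs : RepeatsFrom s a N) (hne : s ≠ []) {P : ℕ} :
    s.rotate P = s ↔ ∃ M, ∀ j, a (M + j + P) = a (M + j) := by
  constructor
  · intro hP
    refine ⟨N, fun j => ?_⟩
    have hs' := hs.rotate P
    rw [hP] at hs'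
    rw [hs j, ← hs' j, add_right_comm]
  · rintro ⟨M, hM⟩
    obtain ⟨N', hN', hs'⟩ := hs.exists_ge hne M
    obtain ⟨l, rfl⟩ := Nat.exists_eq_add_of_le hN'
    refine (hs'.rotate P).eq_of_length_eq (t := s) (fun j => ?_) (List.length_rotate s P)
    rw [← hs' j, add_right_comm, add_assoc M, hM]

end Words

theorem isCFPeriod_iff {s : List ℤ} {ξ : ℝ} :
    IsCFPeriod s ξ ↔ IsPrimitiveWord s ∧ ∃ N, RepeatsFrom s (cfTerm ξ) N := by
  constructor
  · rintro ⟨hne, ⟨N, hN⟩, hmin⟩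
    refine ⟨fun P hP => ?_, N, hN⟩
    by_contra hdvd
    have hpos : 0 < P % s.length := Nat.pos_of_ne_zero fun h => hdvd (Nat.dvd_of_mod_eq_zero h)
    obtain ⟨M, hM⟩ := (RepeatsFrom.rotate_eq_self_iff hN hne).mp ((s.rotate_mod P).trans hP)
    have hle := hmin (P % s.length) hpos ⟨M, hpos, hM⟩
    exact hle.not_gt (Nat.mod_lt P (List.length_pos_iff.mpr hne))
  · rintro ⟨hprim, N, hN⟩
    refine ⟨hprim.ne_nil, ⟨N, hN⟩, fun P hP ⟨M, _, hM⟩ => Nat.le_of_dvd hP (hprim P ?_)⟩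
    exact (hN.rotate_eq_self_iff hprim.ne_nil).mpr ⟨M, hM⟩

lemma IsCFPeriod.length_eq {s t : List ℤ} {ξ : ℝ} (hs : IsCFPeriod s ξ) (ht : IsCFPeriod t ξ) :
    s.length = t.length := by
  obtain ⟨hs', N, hN⟩ := isCFPeriod_iff.mp hs
  obtain ⟨ht', M, hM⟩ := isCFPeriod_iff.mp ht
  refine Nat.dvd_antisymm (hs' _ ?_) (ht' _ ?_)
  · exact (hN.rotate_eq_self_iff hs'.ne_nil).mpr
      ((hM.rotate_eq_self_iff ht'.ne_nil).mp (List.rotate_length t))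
  · exact (hM.rotate_eq_self_iff ht'.ne_nil).mpr
      ((hN.rotate_eq_self_iff hs'.ne_nil).mp (List.rotate_length s))

lemma IsCFPeriod.isRotated {s t : List ℤ} {ξ : ℝ} (hs : IsCFPeriod s ξ) (ht : IsCFPeriod t ξ) :
    s ~r t := by
  obtain ⟨_, N, hN⟩ := isCFPeriod_iff.mp hs
  obtain ⟨_, M, hM⟩ := isCFPeriod_iff.mp ht
  exact hN.isRotated hM ht.1 (hs.length_eq ht)

/-! ### Tails of continued fractions -/

section GaussMap

variable {x y : ℝ}

lemma gaussIter_add (x : ℝ) (i j : ℕ) : gaussIter x (i + j) = gaussIter (gaussIter x i) j := by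
  induction j with
  | zero => rfl
  | succ j ih => rw [← add_assoc, gaussIter, ih, gaussIter]

lemma cfTerm_add (x : ℝ) (i j : ℕ) : cfTerm x (i + j) = cfTerm (gaussIter x i) j := by
  rw [cfTerm, cfTerm, gaussIter_add]

lemma gaussIter_eq_cfTerm_add_one_div (x : ℝ) (n : ℕ) :
    gaussIter x n = cfTerm x n + 1 / gaussIter x (n + 1) := by
  rw [gaussIter, cfTerm, one_div_one_div, add_sub_cancel]

lemma floor_intCast_add_one_div (a : ℤ) (hx : 1 < x) : ⌊a + 1 / x⌋ = a := by
  rw [Int.floor_intCast_add, add_eq_left, Int.floor_eq_zero_iff]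
  exact ⟨by positivity, (div_lt_one (by positivity)).mpr hx⟩

lemma gaussIter_one_intCast_add_one_div (a : ℤ) (hx : 1 < x) :
    gaussIter (a + 1 / x) 1 = x := by
  rw [gaussIter, gaussIter, floor_intCast_add_one_div a hx, add_sub_cancel_left, one_div_one_div]

lemma cfTerm_eq_of_forall_eq_add_one_div {u : ℕ → ℝ} {a : ℕ → ℤ}
    (hu : ∀ n, u n = a n + 1 / u (n + 1)) (hlt : ∀ n, 1 < u (n + 1)) (n : ℕ) :
    cfTerm (u 0) n = a n := by
  have hiter : gaussIter (u 0) n = u n := by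
    induction n with
    | zero => rfl
    | succ n ih => rw [gaussIter_add, ih, hu n, gaussIter_one_intCast_add_one_div _ (hlt n)]
  rw [cfTerm, hiter, hu n, floor_intCast_add_one_div _ (hlt n)]

lemma irrational_one_div_iff : Irrational (1 / x) ↔ Irrational x := by
  rw [one_div, irrational_inv_iff]

lemma irrational_gaussIter (hx : Irrational x) (n : ℕ) : Irrational (gaussIter x n) := by
  induction n with
  | zero => exact hx
  | succ n ih => exact irrational_one_div_iff.mpr (ih.sub_intCast _)

lemma one_lt_gaussIter_succ (hx : Irrational x) (n : ℕ) : 1 < gaussIter x (n + 1) := by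
  have hpos : 0 < Int.fract (gaussIter x n) :=
    Int.fract_pos.mpr ((irrational_gaussIter hx n).ne_int _)
  exact (one_lt_div hpos).mpr (Int.fract_lt_one _)

lemma one_le_cfTerm_succ (hx : Irrational x) (n : ℕ) : (1 : ℝ) ≤ cfTerm x (n + 1) := by
  have h : 1 ≤ cfTerm x (n + 1) :=
    Int.le_floor.mpr (by exact_mod_cast (one_lt_gaussIter_succ hx n).le)
  exact_mod_cast h

lemma stream_eq_gaussIter (hx : Irrational x) (n : ℕ) :
    GenContFract.IntFractPair.stream x n =
      some (GenContFract.IntFractPair.of (gaussIter x n)) := by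
  induction n with
  | zero => rfl
  | succ n ih =>
    have hfract : Int.fract (gaussIter x n) ≠ 0 :=
      (Int.fract_pos.mpr ((irrational_gaussIter hx n).ne_int _)).ne'
    rw [GenContFract.IntFractPair.stream_succ_of_some ih hfract, gaussIter, one_div]
    rfl

lemma of_s_get?_eq_cfTerm (hx : Irrational x) (n : ℕ) :
    (GenContFract.of x).s.get? n = some ⟨1, cfTerm x (n + 1)⟩ :=
  GenContFract.get?_of_eq_some_of_succ_get?_intFractPair_stream (stream_eq_gaussIter hx (n + 1))

theorem eq_of_cfTerm_eq (hx : Irrational x) (hy : Irrational y)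
    (h : ∀ n, cfTerm x n = cfTerm y n) : x = y := by
  have hof : GenContFract.of x = GenContFract.of y := by
    apply GenContFract.ext
    · rw [GenContFract.of_h_eq_floor, GenContFract.of_h_eq_floor]
      exact congrArg _ (h 0)
    · ext1 n
      rw [of_s_get?_eq_cfTerm hx, of_s_get?_eq_cfTerm hy, h]
  have hconv := GenContFract.of_convergence x
  rw [hof] at hconv
  exact tendsto_nhds_unique hconv (GenContFract.of_convergence y)

lemma RepeatsFrom.gaussIter_eq {s : List ℤ} {N M : ℕ} (hx : Irrational x) (hy : Irrational y)
    (hs : RepeatsFrom s (cfTerm x) N) (hs' : RepeatsFrom s (cfTerm y) M) :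
    gaussIter x N = gaussIter y M :=
  eq_of_cfTerm_eq (irrational_gaussIter hx N) (irrational_gaussIter hy M) fun j => by
    rw [← cfTerm_add, ← cfTerm_add, hs, hs']

end GaussMap

/-- The continued fraction expansions of `x` and `y` have a common tail, beginning at index `i` in
one and `j` in the other with `(-1) ^ (i + j) = ε`. Both signs may be possible for the same pair. -/
def IsTailEquiv (ε : ℤˣ) (x y : ℝ) : Prop :=
  ∃ i j : ℕ, gaussIter x i = gaussIter y j ∧ (-1) ^ (i + j) = ε

namespace IsTailEquiv

variable {ε δ : ℤˣ} {x y z : ℝ}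

lemma symm (h : IsTailEquiv ε x y) : IsTailEquiv ε y x := by
  obtain ⟨i, j, hij, hε⟩ := h
  exact ⟨j, i, hij.symm, add_comm i j ▸ hε⟩

lemma trans (hxy : IsTailEquiv ε x y) (hyz : IsTailEquiv δ y z) : IsTailEquiv (ε * δ) x z := by
  obtain ⟨i, j, hij, rfl⟩ := hxy
  obtain ⟨k, l, hkl, rfl⟩ := hyz
  refine ⟨i + k, l + j, ?_, ?_⟩
  · rw [gaussIter_add, hij, ← gaussIter_add, gaussIter_add z, ← hkl, ← gaussIter_add, add_comm]
  · rw [← pow_add]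
    congr 1
    ring

lemma add_intCast (x : ℝ) (q : ℤ) : IsTailEquiv 1 (x + q) x :=
  ⟨1, 1, by simp [gaussIter], by decide⟩

lemma sub_intCast (x : ℝ) (q : ℤ) : IsTailEquiv 1 (x - q) x := by
  simpa [sub_eq_add_neg] using add_intCast x (-q)

lemma intCast_add_one_div (a : ℤ) (hx : 1 < x) : IsTailEquiv (-1) (a + 1 / x) x :=
  ⟨1, 0, gaussIter_one_intCast_add_one_div a hx, by decide⟩

lemma one_div_of_pos (hx : Irrational x) (hpos : 0 < x) : IsTailEquiv (-1) (1 / x) x := by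
  rcases lt_or_gt_of_ne hx.ne_one with hlt | hlt
  · simpa using (intCast_add_one_div 0 ((one_lt_div hpos).mpr hlt)).symm
  · simpa using intCast_add_one_div 0 hlt

/-- With `w = 1 + 1 / (x₁ - 1)`, where `x = a + 1 / x₁`, one has `-x = (-a - 1) + 1 / w`. -/
lemma neg (hx : Irrational x) : IsTailEquiv (-1) (-x) x := by
  have hlt := one_lt_gaussIter_succ hx 0
  have hexp := gaussIter_eq_cfTerm_add_one_div x 0
  have hirr := irrational_gaussIter hx 1
  have htail : IsTailEquiv (-1) (gaussIter x 1) x := ⟨0, 1, rfl, by decide⟩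
  rw [gaussIter, zero_add] at hexp
  generalize gaussIter x 1 = x₁ at *
  generalize cfTerm x 0 = a at *
  have hpos : 0 < x₁ - 1 := sub_pos.mpr hlt
  have hw : 1 < 1 / (x₁ - 1) + 1 := by simpa using hpos
  have hneg : -x = ((-a - 1 : ℤ) : ℝ) + 1 / (1 / (x₁ - 1) + 1) := by
    have := (zero_lt_one.trans hlt).ne'
    have := hpos.ne'
    rw [hexp]
    push_cast
    field_simp
    ring
  have hpeel : IsTailEquiv (-1) (-x) (1 / (x₁ - 1) + 1) :=
    hneg ▸ intCast_add_one_div (-a - 1) hw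
  have hshift : IsTailEquiv 1 (1 / (x₁ - 1) + 1) (1 / (x₁ - 1)) := mod_cast add_intCast _ 1
  have hinv : IsTailEquiv (-1) (1 / (x₁ - 1)) (x₁ - 1) :=
    one_div_of_pos (mod_cast hirr.sub_intCast 1) hpos
  have hshift' : IsTailEquiv 1 (x₁ - 1) x₁ := mod_cast sub_intCast x₁ 1
  exact (((hpeel.trans hshift).trans hinv).trans hshift').trans htail

lemma one_div (hx : Irrational x) : IsTailEquiv (-1) (1 / x) x := by
  rcases lt_or_gt_of_ne hx.ne_zero with hneg | hpos
  · have hinv := one_div_of_pos hx.neg (neg_pos.mpr hneg)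
    rw [one_div_neg_eq_neg_one_div] at hinv
    exact ((neg (irrational_one_div_iff.mpr hx)).symm.trans hinv).trans (neg hx)
  · exact one_div_of_pos hx hpos

lemma neg_one_div (hx : Irrational x) : IsTailEquiv 1 (-(1 / x)) x :=
  (neg (irrational_one_div_iff.mpr hx)).trans (one_div hx)

lemma exists_repeatsFrom {s : List ℤ} {N : ℕ} (hxy : IsTailEquiv ε x y) (hne : s ≠ [])
    (hs : RepeatsFrom s (cfTerm x) N) : ∃ M, RepeatsFrom s (cfTerm y) M := by
  obtain ⟨i, j, hij, -⟩ := hxy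
  obtain ⟨N', hN', hs'⟩ := hs.exists_ge hne i
  obtain ⟨l, rfl⟩ := Nat.exists_eq_add_of_le hN'
  refine ⟨j + l, fun n => ?_⟩
  rw [← hs', add_assoc, add_assoc, cfTerm_add, ← hij, ← cfTerm_add]

lemma isCFPeriod {s : List ℤ} (hxy : IsTailEquiv ε x y) (hs : IsCFPeriod s x) :
    IsCFPeriod s y := by
  obtain ⟨hprim, N, hN⟩ := isCFPeriod_iff.mp hs
  exact isCFPeriod_iff.mpr ⟨hprim, hxy.exists_repeatsFrom hs.1 hN⟩

end IsTailEquiv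

lemma exists_isTailEquiv_iff_isRotated {x y : ℝ} {s t : List ℤ} (hx : Irrational x)
    (hy : Irrational y) (hs : IsCFPeriod s x) (ht : IsCFPeriod t y) :
    (∃ ε, IsTailEquiv ε x y) ↔ s ~r t := by
  constructor
  · rintro ⟨ε, hxy⟩
    exact (hxy.isCFPeriod hs).isRotated ht
  · rintro ⟨k, rfl⟩
    obtain ⟨_, N, hN⟩ := isCFPeriod_iff.mp hs
    obtain ⟨_, M, hM⟩ := isCFPeriod_iff.mp ht
    exact ⟨_, N + k, M, (hN.rotate k).gaussIter_eq hx hy hM, rfl⟩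

lemma IsCFPeriod.odd_length_iff {x : ℝ} {s : List ℤ} (hx : Irrational x) (hs : IsCFPeriod s x) :
    Odd s.length ↔ IsTailEquiv (-1) x x := by
  obtain ⟨hprim, N, hN⟩ := isCFPeriod_iff.mp hs
  constructor
  · intro hodd
    refine ⟨N, N + s.length * 1, hN.gaussIter_eq hx hx (hN.add_length_mul 1), ?_⟩
    exact Odd.neg_one_pow (by grind)
  · rintro ⟨i, j, hij, hsign⟩
    wlog hle : i ≤ j generalizing i j
    · exact this j i hij.symm (add_comm i j ▸ hsign) (not_le.mp hle).le
    obtain ⟨P, rfl⟩ := Nat.exists_eq_add_of_le hle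
    have hdvd : s.length ∣ P := by
      refine hprim P ((hN.rotate_eq_self_iff hs.1).mpr ⟨i, fun n => ?_⟩)
      rw [add_right_comm, cfTerm_add, ← hij, ← cfTerm_add]
    have hP : Odd P := by
      rw [← add_assoc, neg_one_pow_eq_neg_one_iff_odd (by decide)] at hsign
      grind
    exact hP.of_dvd_nat hdvd

/-! ### Fractional linear maps -/

lemma ratCast_mul_add_ratCast_eq_zero_iff {x : ℝ} (hx : Irrational x) {r s : ℚ} :
    r * x + s = 0 ↔ r = 0 ∧ s = 0 := by
  constructor
  · intro h
    have hr : r = 0 := by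
      by_contra hr
      exact ((hx.ratCast_mul hr).add_ratCast s).ne_zero h
    subst hr
    exact ⟨rfl, by simpa using h⟩
  · rintro ⟨rfl, rfl⟩
    simp

lemma intCast_mul_add_intCast_eq_zero_iff {x : ℝ} (hx : Irrational x) {a b : ℤ} :
    a * x + b = 0 ↔ a = 0 ∧ b = 0 := by
  exact_mod_cast ratCast_mul_add_ratCast_eq_zero_iff hx (r := a) (s := b)

lemma intCast_mul_add_intCast_ne_zero_of_det {x : ℝ} (hx : Irrational x) {a b c d : ℤ} {ε : ℤˣ}
    (hdet : a * d - b * c = ε) : (c * x + d : ℝ) ≠ 0 := by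
  rw [Ne, intCast_mul_add_intCast_eq_zero_iff hx]
  rintro ⟨rfl, rfl⟩
  exact ε.ne_zero (by simpa using hdet.symm)

/-- `x` is the image `(a * y + b) / (c * y + d)` of `y` under an integral fractional linear map of
determinant `ε`, written without the denominator. -/
def IsMoebiusEquiv (ε : ℤˣ) (x y : ℝ) : Prop :=
  ∃ a b c d : ℤ, a * d - b * c = ε ∧ x * (c * y + d) = a * y + b

namespace IsMoebiusEquiv

variable {ε δ : ℤˣ} {x y z : ℝ}

lemma refl (x : ℝ) : IsMoebiusEquiv 1 x x := ⟨1, 0, 0, 1, by simp, by simp⟩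

lemma symm (h : IsMoebiusEquiv ε x y) : IsMoebiusEquiv ε y x := by
  obtain ⟨a, b, c, d, hdet, hxy⟩ := h
  refine ⟨d, -b, -c, a, by rw [← hdet]; ring, ?_⟩
  push_cast
  linear_combination -hxy

lemma trans (hxy : IsMoebiusEquiv ε x y) (hyz : IsMoebiusEquiv δ y z) :
    IsMoebiusEquiv (ε * δ) x z := by
  obtain ⟨a, b, c, d, hdet, hxy⟩ := hxy
  obtain ⟨p, q, r, s, hdet', hyz⟩ := hyz
  refine ⟨a * p + b * r, a * q + b * s, c * p + d * r, c * q + d * s, ?_, ?_⟩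
  · rw [Units.val_mul, ← hdet, ← hdet']
    ring
  · push_cast
    linear_combination (r * z + s) * hxy - (c * x - a) * hyz

lemma irrational (hy : Irrational y) (h : IsMoebiusEquiv ε x y) : Irrational x := by
  rintro ⟨r, rfl⟩
  obtain ⟨a, b, c, d, hdet, hxy⟩ := h
  have hlin : ((r * c - a : ℚ) : ℝ) * y + (r * d - b : ℚ) = 0 := by
    push_cast
    linear_combination hxy
  obtain ⟨ha, hb⟩ := (ratCast_mul_add_ratCast_eq_zero_iff hy).mp hlin
  have hzero : ((a * d - b * c : ℤ) : ℚ) = 0 := by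
    push_cast
    linear_combination c * hb - d * ha
  exact ε.ne_zero (hdet ▸ Int.cast_eq_zero.mp hzero)

lemma gaussIter (hx : Irrational x) (n : ℕ) :
    IsMoebiusEquiv ((-1) ^ n) x (gaussIter x n) := by
  induction n with
  | zero => exact refl x
  | succ n ih =>
    rw [pow_succ]
    refine ih.trans ⟨cfTerm x n, 1, 1, 0, by simp, ?_⟩
    have hne := (irrational_gaussIter hx (n + 1)).ne_zero
    rw [gaussIter_eq_cfTerm_add_one_div x n]
    push_cast
    field_simp
    ring

end IsMoebiusEquiv

lemma IsTailEquiv.isMoebiusEquiv {ε : ℤˣ} {x y : ℝ} (hx : Irrational x) (hy : Irrational y)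
    (h : IsTailEquiv ε x y) : IsMoebiusEquiv ε x y := by
  obtain ⟨i, j, hij, rfl⟩ := h
  rw [pow_add]
  exact (hij ▸ IsMoebiusEquiv.gaussIter hx i).trans (IsMoebiusEquiv.gaussIter hy j).symm

open scoped MatrixGroups in
lemma isTailEquiv_one_of_SL2Z (g : SL(2, ℤ)) {x y : ℝ} (hy : Irrational y)
    (h : x * (g 1 0 * y + g 1 1) = g 0 0 * y + g 0 1) : IsTailEquiv 1 x y := by
  have hdet (g : SL(2, ℤ)) : g 0 0 * g 1 1 - g 0 1 * g 1 0 = (1 : ℤˣ) := by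
    rw [Units.val_one, ← Matrix.det_fin_two, g.det_coe]
  have hg : g ∈ Subgroup.closure {ModularGroup.S, ModularGroup.T} := by
    simp only [SpecialLinearGroup.SL2Z_generators, Subgroup.mem_top]
  induction hg using Subgroup.closure_induction generalizing x y with
  | mem g hg =>
    rcases hg with rfl | rfl
    · have hx : x = -(1 / y) := by
        have hmul : x * y = -1 := by simpa [ModularGroup.S] using h
        rw [← neg_div, eq_div_iff hy.ne_zero, hmul]
      exact hx ▸ IsTailEquiv.neg_one_div hy
    · have hx : x = y + (1 : ℤ) := by simpa [ModularGroup.T] using h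
      exact hx ▸ IsTailEquiv.add_intCast y 1
  | one =>
    have hx : x = y + (0 : ℤ) := by simpa using h
    exact hx ▸ IsTailEquiv.add_intCast y 0
  | mul g g' _ _ ih ih' =>
    have hden := intCast_mul_add_intCast_ne_zero_of_det hy (hdet g')
    set z := (g' 0 0 * y + g' 0 1 : ℝ) / (g' 1 0 * y + g' 1 1)
    have hzy : z * (g' 1 0 * y + g' 1 1) = g' 0 0 * y + g' 0 1 := div_mul_cancel₀ _ hden
    have hz : Irrational z := IsMoebiusEquiv.irrational hy ⟨_, _, _, _, hdet g', hzy⟩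
    have hxz : x * (g 1 0 * z + g 1 1) = g 0 0 * z + g 0 1 := by
      simp only [Matrix.SpecialLinearGroup.coe_mul, Matrix.mul_apply, Fin.sum_univ_two] at h
      push_cast at h
      apply mul_right_cancel₀ hden
      linear_combination h + (x * g 1 0 - g 0 0) * hzy
    exact (ih hz hxz).trans (ih' hy hzy)
  | inv g _ ih =>
    have hx : Irrational x := IsMoebiusEquiv.irrational hy ⟨_, _, _, _, hdet g⁻¹, h⟩
    refine (ih hx ?_).symm
    have hinv : x * (-(g 1 0) * y + g 0 0) = g 1 1 * y + -(g 0 1) := by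
      simpa [Matrix.SpecialLinearGroup.SL2_inv_expl] using h
    linear_combination -hinv

/-- **Serret's theorem**, keeping track of the determinant. -/
theorem isMoebiusEquiv_iff_isTailEquiv {ε : ℤˣ} {x y : ℝ} (hx : Irrational x)
    (hy : Irrational y) : IsMoebiusEquiv ε x y ↔ IsTailEquiv ε x y := by
  have of_det_one {x : ℝ} (h : IsMoebiusEquiv 1 x y) : IsTailEquiv 1 x y := by
    obtain ⟨a, b, c, d, hdet, hxy⟩ := h
    exact isTailEquiv_one_of_SL2Z ⟨!![a, b; c, d], by simpa [Matrix.det_fin_two] using hdet⟩ hy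
      (by simpa using hxy)
  refine ⟨fun h => ?_, IsTailEquiv.isMoebiusEquiv hx hy⟩
  rcases Int.units_eq_one_or ε with rfl | rfl
  · exact of_det_one h
  · have hneg : IsMoebiusEquiv (-1) (-x) x := ⟨-1, 0, 0, 1, by simp, by simp⟩
    exact (IsTailEquiv.neg hx).symm.trans (of_det_one (hneg.trans h))

/-! ### Conjugates and Galois reversal -/

/-- `x` is a quadratic irrational and `x'` is its Galois conjugate, expressed by the rationality of
the trace `x + x'` and the norm `x * x'`. -/
structure IsConjugatePair (x x' : ℝ) : Prop where
  irrational : Irrational x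
  exists_add_eq : ∃ r : ℚ, x + x' = r
  exists_mul_eq : ∃ r : ℚ, x * x' = r

namespace IsConjugatePair

variable {x x' x'' : ℝ}

lemma symm (h : IsConjugatePair x x') : IsConjugatePair x' x := by
  obtain ⟨r, hr⟩ := h.exists_add_eq
  refine ⟨?_, ⟨r, add_comm x x' ▸ hr⟩, mul_comm x x' ▸ h.exists_mul_eq⟩
  rw [eq_sub_of_add_eq' hr]
  exact h.irrational.ratCast_sub r

lemma sub_intCast (h : IsConjugatePair x x') (a : ℤ) : IsConjugatePair (x - a) (x' - a) := by
  obtain ⟨r, hr⟩ := h.exists_add_eq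
  obtain ⟨s, hs⟩ := h.exists_mul_eq
  refine ⟨h.irrational.sub_intCast a, ⟨r - 2 * a, ?_⟩, ⟨s - a * r + a ^ 2, ?_⟩⟩ <;> push_cast
  · linear_combination hr
  · linear_combination hs - a * hr

lemma one_div (h : IsConjugatePair x x') : IsConjugatePair (1 / x) (1 / x') := by
  obtain ⟨r, hr⟩ := h.exists_add_eq
  obtain ⟨s, hs⟩ := h.exists_mul_eq
  have hx := h.irrational.ne_zero
  have hx' := h.symm.irrational.ne_zero
  refine ⟨irrational_one_div_iff.mpr h.irrational, ⟨r / s, ?_⟩, ⟨1 / s, ?_⟩⟩ <;> push_cast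
  · rw [← hr, ← hs]
    field_simp
    ring
  · rw [← hs]
    field_simp

lemma ne (h : IsConjugatePair x x') : x ≠ x' := by
  rintro rfl
  obtain ⟨r, hr⟩ := h.exists_add_eq
  apply h.irrational.ne_rat (r / 2)
  push_cast
  linarith

lemma unique (h : IsConjugatePair x x') (h' : IsConjugatePair x x'') : x' = x'' := by
  obtain ⟨r, hr⟩ := h.exists_add_eq
  obtain ⟨s, hs⟩ := h.exists_mul_eq
  obtain ⟨r', hr'⟩ := h'.exists_add_eq
  obtain ⟨s', hs'⟩ := h'.exists_mul_eq
  have hlin : ((r - r' : ℚ) : ℝ) * x + (s' - s : ℚ) = 0 := by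
    push_cast
    linear_combination hs - hs' - x * hr + x * hr'
  have hrr' := sub_eq_zero.mp ((ratCast_mul_add_ratCast_eq_zero_iff h.irrational).mp hlin).1
  rw [hrr', ← hr'] at hr
  exact add_left_cancel hr

end IsConjugatePair

/-- The conjugates of the iterates `gaussIter x n`, obtained by applying to the conjugate `x'` of
`x` the fractional linear maps that produce these iterates from `x`. -/
noncomputable def conjIter (x x' : ℝ) : ℕ → ℝ
  | 0 => x'
  | n + 1 => 1 / (conjIter x x' n - cfTerm x n)

section Conjugates

variable {x x' : ℝ}

lemma conjIter_eq_cfTerm_add_one_div (x x' : ℝ) (n : ℕ) :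
    conjIter x x' n = cfTerm x n + 1 / conjIter x x' (n + 1) := by
  rw [conjIter, one_div_one_div, add_sub_cancel]

lemma IsConjugatePair.gaussIter (h : IsConjugatePair x x') (n : ℕ) :
    IsConjugatePair (gaussIter x n) (conjIter x x' n) := by
  induction n with
  | zero => exact h
  | succ n ih => exact (ih.sub_intCast _).one_div

lemma IsConjugatePair.isTailEquiv_conjIter (h : IsConjugatePair x x') (n : ℕ) :
    IsTailEquiv ((-1) ^ n) (conjIter x x' n) x' := by
  induction n with
  | zero => exact ⟨0, 0, rfl, rfl⟩
  | succ n ih =>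
    have hirr := ((h.gaussIter n).sub_intCast (cfTerm x n)).symm.irrational
    rw [pow_succ', conjIter, ← one_mul ((-1) ^ n)]
    exact (IsTailEquiv.one_div hirr).trans ((IsTailEquiv.sub_intCast _ _).trans ih)

/-- Otherwise the conjugate iterates would have the same partial quotients as `x`. -/
lemma IsConjugatePair.exists_conjIter_neg (h : IsConjugatePair x x') :
    ∃ n, conjIter x x' (n + 1) < 0 := by
  by_contra! hnonneg
  have hpos (n : ℕ) : 0 < conjIter x x' (n + 1) :=
    (hnonneg n).lt_of_ne (h.gaussIter (n + 1)).symm.irrational.ne_zero.symm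
  have hlt (n : ℕ) : 1 < conjIter x x' (n + 1) := by
    rw [conjIter_eq_cfTerm_add_one_div]
    exact lt_add_of_le_of_pos (one_le_cfTerm_succ h.irrational n) (one_div_pos.mpr (hpos (n + 1)))
  refine (h.gaussIter 1).ne (eq_of_cfTerm_eq (h.gaussIter 1).irrational
    (h.gaussIter 1).symm.irrational fun n => ?_)
  rw [← cfTerm_add, add_comm]
  exact (cfTerm_eq_of_forall_eq_add_one_div (u := fun n => conjIter x x' (n + 1))
    (fun n => conjIter_eq_cfTerm_add_one_div x x' (n + 1)) (fun n => hlt (n + 1)) n).symm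

lemma conjIter_mem_Ioo_of_neg (hx : Irrational x) {n : ℕ} (hneg : conjIter x x' (n + 1) < 0) :
    conjIter x x' (n + 2) ∈ Set.Ioo (-1) 0 := by
  have hlt : conjIter x x' (n + 1) - cfTerm x (n + 1) < -1 := by
    linarith [one_le_cfTerm_succ hx n]
  rw [conjIter]
  constructor
  · rw [lt_div_iff_of_neg (by linarith)]
    linarith
  · exact one_div_neg.mpr (by linarith)

lemma IsConjugatePair.eventually_conjIter_mem_Ioo (h : IsConjugatePair x x') :
    ∃ N, ∀ n ≥ N, conjIter x x' n ∈ Set.Ioo (-1) 0 := by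
  obtain ⟨N, hN⟩ := h.exists_conjIter_neg
  refine ⟨N + 2, fun n hn => ?_⟩
  induction n, hn using Nat.le_induction with
  | base => exact conjIter_mem_Ioo_of_neg h.irrational hN
  | succ n hn ih =>
    obtain ⟨m, rfl⟩ := Nat.exists_eq_add_of_le' (show 1 ≤ n by omega)
    exact conjIter_mem_Ioo_of_neg h.irrational ih.2

/-- **Galois' reversal**: since `-1 / x'ₙ₊₁ = aₙ + 1 / (-1 / x'ₙ)`, the continued fraction of
`-1 / x'ₙ` runs backwards through the partial quotients of `x`. -/
lemma cfTerm_neg_one_div_conjIter {n : ℕ}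
    (hred : ∀ i ≥ n, conjIter x x' i ∈ Set.Ioo (-1) 0) (j : ℕ) :
    cfTerm (-(1 / conjIter x x' (n + 1 + j))) j = cfTerm x n := by
  have hlt (i : ℕ) (hi : n ≤ i) : 1 < -(1 / conjIter x x' i) := by
    obtain ⟨hgt, hneg⟩ := hred i hi
    rw [← neg_div, lt_div_iff_of_neg hneg]
    linarith
  have hstep (i : ℕ) : -(1 / conjIter x x' (i + 1)) =
      cfTerm x i + 1 / -(1 / conjIter x x' i) := by
    rw [one_div_neg_eq_neg_one_div, one_div_one_div]
    linarith [conjIter_eq_cfTerm_add_one_div x x' i]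
  have hiter : gaussIter (-(1 / conjIter x x' (n + 1 + j))) j =
      -(1 / conjIter x x' (n + 1)) := by
    induction j with
    | zero => rfl
    | succ j ih =>
      rw [← add_assoc, add_comm j 1, gaussIter_add, hstep,
        gaussIter_one_intCast_add_one_div _ (hlt _ (by omega)), ih]
  rw [cfTerm, hiter, hstep, floor_intCast_add_one_div _ (hlt n le_rfl)]

theorem IsCFPeriod.reverse {s : List ℤ} (h : IsConjugatePair x x') (hs : IsCFPeriod s x) :
    IsCFPeriod s.reverse x' := by
  obtain ⟨hprim, N, hN⟩ := isCFPeriod_iff.mp hs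
  obtain ⟨M, hM⟩ := h.eventually_conjIter_mem_Ioo
  obtain ⟨K, hMK, hK⟩ := hN.exists_ge hs.1 M
  have hperiod (q : ℕ) : conjIter x x' (K + s.length * q) = conjIter x x' K := by
    refine (h.gaussIter _).unique (x := gaussIter x (K + s.length * q)) ?_
    rw [(hK.add_length_mul q).gaussIter_eq h.irrational h.irrational hK]
    exact h.gaussIter K
  have hrev : RepeatsFrom s.reverse (cfTerm (-(1 / conjIter x x' K))) 0 := by
    intro j
    have hpos := List.length_pos_iff.mpr hs.1
    have hindex : K + s.length * (j + 1) = K + (s.length - 1) * (j + 1) + 1 + j := by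
      obtain ⟨m, hm⟩ : ∃ m, s.length = m + 1 := Nat.exists_eq_add_of_le' hpos
      rw [hm, Nat.add_sub_cancel]
      ring
    rw [zero_add, List.length_reverse, getD_reverse_mod hs.1, ← hK, ← hperiod (j + 1), hindex]
    exact cfTerm_neg_one_div_conjIter (fun i hi => hM i (by omega)) j
  have htail := (IsTailEquiv.neg_one_div (h.gaussIter K).symm.irrational).trans
    (h.isTailEquiv_conjIter K)
  exact htail.isCFPeriod (isCFPeriod_iff.mpr ⟨hprim.reverse, 0, hrev⟩)

theorem IsCFPeriod.palindromic_and_odd_iff {s : List ℤ} (h : IsConjugatePair x x')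
    (hs : IsCFPeriod s x) :
    (Palindromic s ∧ Odd s.length) ↔ IsTailEquiv (-1) x x' ∧ IsTailEquiv 1 x x' := by
  have hrot := exists_isTailEquiv_iff_isRotated h.irrational h.symm.irrational hs (hs.reverse h)
  constructor
  · rintro ⟨hpal, hodd⟩
    obtain ⟨ε, hε⟩ := hrot.mpr ((palindromic_iff_isRotated_reverse hodd).mp hpal)
    have hflip := ((hs.odd_length_iff h.irrational).mp hodd).trans hε
    rcases Int.units_eq_one_or ε with rfl | rfl
    · exact ⟨hflip, hε⟩
    · exact ⟨hε, hflip⟩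
  · rintro ⟨hneg, hpos⟩
    have hodd := (hs.odd_length_iff h.irrational).mpr (hneg.trans hpos.symm)
    exact ⟨(palindromic_iff_isRotated_reverse hodd).mpr (hrot.mp ⟨1, hpos⟩), hodd⟩

end Conjugates

/-! ### Binary quadratic forms and their roots -/

section Forms

variable {f g : ℤ × ℤ × ℤ}

lemma eq_of_qval_eq (h : ∀ x y, qval f x y = qval g x y) : f = g := by
  obtain ⟨m, n, k⟩ := f
  obtain ⟨m', n', k'⟩ := g
  have h10 := h 1 0
  have h01 := h 0 1
  have h11 := h 1 1
  simp only [qval] at h10 h01 h11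
  ext <;> linarith

/-- The coefficients of the form `f (a * x + b * y) (c * x + d * y)`. -/
def substForm (f : ℤ × ℤ × ℤ) (a b c d : ℤ) : ℤ × ℤ × ℤ :=
  (qval f a c, qval f b d, 2 * f.1 * a * b + 2 * f.2.1 * c * d + f.2.2 * (a * d + b * c))

lemma qval_substForm (f : ℤ × ℤ × ℤ) (a b c d x y : ℤ) :
    qval (substForm f a b c d) x y = qval f (a * x + b * y) (c * x + d * y) := by
  simp only [qval, substForm]
  ring

lemma formDisc_substForm (f : ℤ × ℤ × ℤ) (a b c d : ℤ) :
    formDisc (substForm f a b c d) = (a * d - b * c) ^ 2 * formDisc f := by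
  simp only [qval, formDisc, substForm]
  ring

lemma slEquiv_iff_exists_substForm :
    SLEquiv f g ↔ ∃ a b c d : ℤ, a * d - b * c = 1 ∧ g = substForm f a b c d := by
  constructor
  · rintro ⟨a, b, c, d, hdet, hg⟩
    exact ⟨a, b, c, d, hdet, eq_of_qval_eq fun x y => (hg x y).trans (qval_substForm ..).symm⟩
  · rintro ⟨a, b, c, d, hdet, rfl⟩
    exact ⟨a, b, c, d, hdet, qval_substForm f a b c d⟩

lemma formDisc_conjF (f : ℤ × ℤ × ℤ) : formDisc (conjF f) = formDisc f := by
  simp only [formDisc, conjF]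
  ring

lemma formDisc_adjF (f : ℤ × ℤ × ℤ) : formDisc (adjF f) = formDisc f := by
  simp only [formDisc, adjF]
  ring

lemma fst_ne_zero (hsq : ¬ IsSquare (formDisc f)) : f.1 ≠ 0 := by
  intro hm
  exact hsq ⟨f.2.2, by rw [formDisc, hm]; ring⟩

lemma snd_fst_ne_zero (hsq : ¬ IsSquare (formDisc f)) : f.2.1 ≠ 0 := by
  intro hn
  exact hsq ⟨f.2.2, by rw [formDisc, hn]; ring⟩

lemma two_mul_xiPlus_add (hm : f.1 ≠ 0) : 2 * f.1 * xiPlus f + f.2.2 = √(formDisc f : ℝ) := by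
  rw [xiPlus]
  field_simp
  ring

lemma xiPlus_add_xiMinus (hm : f.1 ≠ 0) : xiPlus f + xiMinus f = -f.2.2 / f.1 := by
  rw [xiPlus, xiMinus]
  field_simp
  ring

lemma sq_sqrt_formDisc (hnonneg : 0 ≤ formDisc f) :
    √(formDisc f : ℝ) ^ 2 = f.2.2 ^ 2 - 4 * f.1 * f.2.1 := by
  rw [Real.sq_sqrt (by exact_mod_cast hnonneg), formDisc]
  push_cast
  rfl

lemma xiPlus_mul_xiMinus (hnonneg : 0 ≤ formDisc f) (hm : f.1 ≠ 0) :
    xiPlus f * xiMinus f = f.2.1 / f.1 := by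
  rw [xiPlus, xiMinus]
  field_simp
  linear_combination -sq_sqrt_formDisc hnonneg

lemma xiPlus_conjF (f : ℤ × ℤ × ℤ) : xiPlus (conjF f) = -xiMinus f := by
  rw [xiPlus, xiMinus, formDisc_conjF, ← neg_div, conjF]
  push_cast
  ring

lemma xiPlus_adjF (hnonneg : 0 ≤ formDisc f) (hm : f.1 ≠ 0) (hn : f.2.1 ≠ 0) :
    xiPlus (adjF f) = -(1 / xiMinus f) := by
  have hmul := xiPlus_mul_xiMinus hnonneg hm
  have hne : xiMinus f ≠ 0 := by
    refine right_ne_zero_of_mul (hmul.trans_ne (div_ne_zero ?_ ?_)) <;> exact_mod_cast ‹_›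
  have hadj : xiPlus (adjF f) = -(f.1 / f.2.1 * xiPlus f) := by
    rw [xiPlus, xiPlus, formDisc_adjF, adjF]
    push_cast
    field_simp
  rw [hadj, eq_div_of_mul_eq hne hmul]
  field_simp

lemma xiPlus_substForm (hnonneg : 0 ≤ formDisc f) {a b c d : ℤ} (hdet : a * d - b * c = 1)
    (hm : f.1 ≠ 0) (hm' : (substForm f a b c d).1 ≠ 0) :
    xiPlus f * (c * xiPlus (substForm f a b c d) + d) = a * xiPlus (substForm f a b c d) + b := by
  have hξ := two_mul_xiPlus_add hm
  have hη := two_mul_xiPlus_add hm'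
  have hδ := sq_sqrt_formDisc hnonneg
  rw [formDisc_substForm, hdet, one_pow, one_mul] at hη
  have hleading : (2 * f.1 * (2 * (substForm f a b c d).1) : ℝ) ≠ 0 := by
    exact_mod_cast mul_ne_zero (mul_ne_zero two_ne_zero hm) (mul_ne_zero two_ne_zero hm')
  have hdet' : (a * d - b * c : ℝ) = 1 := by exact_mod_cast hdet
  apply mul_left_cancel₀ hleading
  generalize xiPlus (substForm f a b c d) = η at *
  generalize xiPlus f = ξ at *
  generalize √(formDisc f : ℝ) = δ at *
  simp only [substForm, qval] at hη ⊢
  push_cast at hη ⊢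
  linear_combination
    2 * (f.1 * a ^ 2 + f.2.1 * c ^ 2 + f.2.2 * a * c) * (c * η + d) * hξ +
    ((δ - f.2.2) * c - 2 * f.1 * a) * hη + c * hδ +
    ((2 * f.1 * a + f.2.2 * c) * δ - c * (f.2.2 ^ 2 - 4 * f.1 * f.2.1)) * hdet'

lemma irrational_sqrt_formDisc (hpos : 0 < formDisc f) (hsq : ¬ IsSquare (formDisc f)) :
    Irrational √(formDisc f : ℝ) :=
  irrational_sqrt_intCast_iff.mpr ⟨hsq, hpos.le⟩

lemma irrational_xiPlus (hpos : 0 < formDisc f) (hsq : ¬ IsSquare (formDisc f)) :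
    Irrational (xiPlus f) := by
  have hδ := irrational_sqrt_formDisc hpos hsq
  rw [← two_mul_xiPlus_add (fst_ne_zero hsq)] at hδ
  have hmul := Irrational.of_add_intCast _ hδ
  exact Irrational.of_intCast_mul (2 * f.1) (by exact_mod_cast hmul)

lemma isConjugatePair_xiPlus_xiMinus (hpos : 0 < formDisc f) (hsq : ¬ IsSquare (formDisc f)) :
    IsConjugatePair (xiPlus f) (xiMinus f) where
  irrational := irrational_xiPlus hpos hsq
  exists_add_eq := ⟨-f.2.2 / f.1, by exact_mod_cast xiPlus_add_xiMinus (fst_ne_zero hsq)⟩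
  exists_mul_eq := ⟨f.2.1 / f.1, by exact_mod_cast xiPlus_mul_xiMinus hpos.le (fst_ne_zero hsq)⟩

lemma xiPlus_eq_iff (hpos : 0 < formDisc f) (hsq : ¬ IsSquare (formDisc f))
    (hdisc : formDisc f = formDisc g) : xiPlus f = xiPlus g ↔ f = g := by
  refine ⟨fun h => ?_, congrArg xiPlus⟩
  have hm := fst_ne_zero hsq
  have hf := two_mul_xiPlus_add hm
  have hg := two_mul_xiPlus_add (fst_ne_zero (hdisc ▸ hsq : ¬ IsSquare (formDisc g)))
  rw [← hdisc, ← h] at hg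
  have hlin : ((2 * (f.1 - g.1) : ℤ) : ℝ) * xiPlus f + (f.2.2 - g.2.2 : ℤ) = 0 := by
    push_cast
    linear_combination hf - hg
  obtain ⟨hfst, hlast⟩ :=
    (intCast_mul_add_intCast_eq_zero_iff (irrational_xiPlus hpos hsq)).mp hlin
  have hm' : f.1 = g.1 := by linarith
  have hk : f.2.2 = g.2.2 := by linarith
  have hn : f.2.1 = g.2.1 := by
    rw [formDisc, formDisc, hk, ← hm'] at hdisc
    exact mul_left_cancel₀ hm (by linarith)
  ext <;> assumption

lemma slEquiv_iff_isMoebiusEquiv (hpos : 0 < formDisc f) (hsq : ¬ IsSquare (formDisc f))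
    (hdisc : formDisc f = formDisc g) :
    SLEquiv f g ↔ IsMoebiusEquiv 1 (xiPlus f) (xiPlus g) := by
  have xiPlus_substForm_of_det {a b c d : ℤ} (hdet : a * d - b * c = 1) :=
    xiPlus_substForm hpos.le hdet (fst_ne_zero hsq)
      (fst_ne_zero (by rwa [formDisc_substForm, hdet, one_pow, one_mul]))
  rw [slEquiv_iff_exists_substForm]
  constructor
  · rintro ⟨a, b, c, d, hdet, rfl⟩
    exact ⟨a, b, c, d, hdet, xiPlus_substForm_of_det hdet⟩
  · rintro ⟨a, b, c, d, hdet, hxy⟩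
    rw [Units.val_one] at hdet
    refine ⟨a, b, c, d, hdet, (xiPlus_eq_iff (hdisc ▸ hpos) (hdisc ▸ hsq) ?_).mp ?_⟩
    · rw [formDisc_substForm, hdet, hdisc, one_pow, one_mul]
    · have hden := intCast_mul_add_intCast_ne_zero_of_det (irrational_xiPlus hpos hsq)
        (a := -d) (b := b) (c := c) (d := -a) (ε := 1) (by simpa [mul_comm d] using hdet)
      push_cast at hden
      apply mul_left_cancel₀ hden
      linear_combination hxy - xiPlus_substForm_of_det hdet

lemma slEquiv_iff_isTailEquiv (hpos : 0 < formDisc f) (hsq : ¬ IsSquare (formDisc f))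
    (hdisc : formDisc f = formDisc g) :
    SLEquiv f g ↔ IsTailEquiv 1 (xiPlus f) (xiPlus g) := by
  rw [slEquiv_iff_isMoebiusEquiv hpos hsq hdisc, isMoebiusEquiv_iff_isTailEquiv
    (irrational_xiPlus hpos hsq) (irrational_xiPlus (hdisc ▸ hpos) (hdisc ▸ hsq))]

lemma slEquiv_conjF_iff (hpos : 0 < formDisc f) (hsq : ¬ IsSquare (formDisc f)) :
    SLEquiv f (conjF f) ↔ IsTailEquiv (-1) (xiPlus f) (xiMinus f) := by
  have hneg := IsTailEquiv.neg (isConjugatePair_xiPlus_xiMinus hpos hsq).symm.irrational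
  rw [slEquiv_iff_isTailEquiv hpos hsq (formDisc_conjF f).symm, xiPlus_conjF]
  exact ⟨fun h => h.trans hneg, fun h => h.trans hneg.symm⟩

lemma slEquiv_adjF_iff (hpos : 0 < formDisc f) (hsq : ¬ IsSquare (formDisc f)) :
    SLEquiv f (adjF f) ↔ IsTailEquiv 1 (xiPlus f) (xiMinus f) := by
  have hinv := IsTailEquiv.neg_one_div (isConjugatePair_xiPlus_xiMinus hpos hsq).symm.irrational
  rw [slEquiv_iff_isTailEquiv hpos hsq (formDisc_adjF f).symm,
    xiPlus_adjF hpos.le (fst_ne_zero hsq) (snd_fst_ne_zero hsq)]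
  exact ⟨fun h => h.trans hinv, fun h => h.trans hinv.symm⟩

end Forms

/-- The period `Γ(m,n,k)` is palindromic and odd iff the class `C(m,n,k)` is
supersymmetric. -/
theorem statement5 (m n k : ℤ)
    (hpos : 0 < formDisc (m, n, k)) (hsq : ¬ IsSquare (formDisc (m, n, k))) :
    ∀ s : List ℤ, IsCFPeriod s (xiPlus (m, n, k)) →
      ((Palindromic s ∧ Odd s.length) ↔
        (SLEquiv (m, n, k) (conjF (m, n, k)) ∧ SLEquiv (m, n, k) (adjF (m, n, k)))) := by
  intro s hs
  rw [hs.palindromic_and_odd_iff (isConjugatePair_xiPlus_xiMinus hpos hsq),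
    slEquiv_conjF_iff hpos hsq, slEquiv_adjF_iff hpos hsq]
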